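/- arXiv:2508.21656 — 2 statements merged into one kernel-verified Lean document; each statement's English description precedes it below -/
import Mathlib

section
/- Let d ≥ 1. There exists a constant C = C(d) > 0, depending only on d, with the following property. Let L₀ ≥ 1 be an integer and let X = {x₁,…,xₙ} ⊂ S^d be a spherical t-design with t ≥ 2L₀. Then for every integer L ≥ L₀ and every g ∈ 𝒫_L^d one has (1/n) Σ_{i=1}^n g(xᵢ)² ≤ C · (L/L₀)^d · ∫_{S^d} g(x)² dμ(x). -/
/-!
Let `D_M = dim 𝒫_M^d` (as functions on the sphere) and let `K(x, y) = ∑ eⱼ(x) eⱼ(y)` be the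
reproducing kernel of `𝒫_{L₀}^d`, for an `L²(μ)`-orthonormal basis `eⱼ`. Rotation invariance
makes reproducing kernels constant on the diagonal, so `K(x, x) = D_{L₀}`, and every
`f ∈ 𝒫_M^d` satisfies `f(x)² ≤ D_M ∫ f²` (`exists_kernel`).

For `g ∈ 𝒫_L^d` and a point `x`, the product `g · K(x, ·)` lies in `𝒫_{L+L₀}^d` and takes the
value `D_{L₀} g(x)` at `x`. Hence `D_{L₀}² g(x)² ≤ D_{L+L₀} ∫ g(y)² K(x, y)² dμ(y)`.
Averaging over the design, `x ↦ K(x, y)²` has degree at most `2 L₀ ≤ t`, so its average is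
`∫ K(x, y)² dμ(x) = K(y, y) = D_{L₀}`. This gives the inequality with constant
`D_{L+L₀} / D_{L₀}` (`design_sum_le`).

The ratio is at most a constant times `(L / L₀)^d` because `D_M` has exact order `M^d`
(`finrank_ratio_le`): modulo `∑ xᵢ² = 1` every polynomial is at most linear in `x₀`, and
monomials in the other `d` coordinates are linearly independent on the sphere.
-/

open MeasureTheory

noncomputable section

abbrev Sph (d : ℕ) := Metric.sphere (0 : EuclideanSpace ℝ (Fin (d+1))) 1

/-- Evaluation on the sphere of a polynomial in `d+1` variables. -/
def polyEval {d : ℕ} (q : MvPolynomial (Fin (d+1)) ℝ) (x : Sph d) : ℝ :=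
  MvPolynomial.eval (fun i => (x : EuclideanSpace ℝ (Fin (d+1))) i) q

/-- `f` is the restriction to the sphere of a real polynomial of total degree ≤ L,
i.e. `f ∈ 𝒫_L^d`. -/
def InPoly (d L : ℕ) (f : Sph d → ℝ) : Prop :=
  ∃ q : MvPolynomial (Fin (d+1)) ℝ, q.totalDegree ≤ L ∧ ∀ x, f x = polyEval q x

/-- Rotation (linear isometry) acting on the sphere. -/
def sphereRot {d : ℕ}
    (T : EuclideanSpace ℝ (Fin (d+1)) ≃ₗᵢ[ℝ] EuclideanSpace ℝ (Fin (d+1)))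
    (x : Sph d) : Sph d :=
  ⟨T x, by
    have hx : ‖(x : EuclideanSpace ℝ (Fin (d+1)))‖ = 1 := by
      simpa using mem_sphere_zero_iff_norm.mp x.2
    simp [mem_sphere_zero_iff_norm, hx]⟩

/-- `μ` is the normalized rotation-invariant (uniform) surface probability measure
on the sphere. -/
def IsUniform {d : ℕ} (μ : Measure (Sph d)) : Prop :=
  IsProbabilityMeasure μ ∧
    ∀ T : EuclideanSpace ℝ (Fin (d+1)) ≃ₗᵢ[ℝ] EuclideanSpace ℝ (Fin (d+1)),
      μ.map (sphereRot T) = μ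

/-- `x` is a spherical `t`-design (w.r.t. the uniform measure `μ`). -/
def IsDesign {d : ℕ} (μ : Measure (Sph d)) {n : ℕ} (x : Fin n → Sph d) (t : ℕ) : Prop :=
  ∀ q : MvPolynomial (Fin (d+1)) ℝ, q.totalDegree ≤ t →
    (∑ i, polyEval q (x i)) / n = ∫ y, polyEval q y ∂μ

end
section DesignBound

open MvPolynomial

/-! ### Polynomial spaces on the sphere and rotations -/

/-- Polynomial evaluation on the sphere, as a linear map into the continuous functions. -/
noncomputable def polyC (d : ℕ) : MvPolynomial (Fin (d+1)) ℝ →ₗ[ℝ] C(Sph d, ℝ) where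
  toFun q := ⟨fun x => polyEval q x, by
    unfold polyEval
    exact (MvPolynomial.continuous_eval q).comp (by fun_prop)⟩
  map_add' p q := by ext x; simp [polyEval]
  map_smul' c p := by ext x; simp [polyEval, MvPolynomial.smul_eval]

/-- The space `𝒫_M^d`, as a space of continuous functions on the sphere. -/
noncomputable def polySpace (d M : ℕ) : Submodule ℝ C(Sph d, ℝ) :=
  (restrictTotalDegree (Fin (d+1)) ℝ M).map (polyC d)

lemma mem_polySpace {d M : ℕ} {f : C(Sph d, ℝ)} :
    f ∈ polySpace d M ↔ ∃ q : MvPolynomial (Fin (d+1)) ℝ, q.totalDegree ≤ M ∧ polyC d q = f := by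
  simp [polySpace, Submodule.mem_map, mem_restrictTotalDegree]

lemma polyC_apply {d : ℕ} (q : MvPolynomial (Fin (d+1)) ℝ) (x : Sph d) :
    polyC d q x = polyEval q x := rfl

lemma polyC_mul {d : ℕ} (p q : MvPolynomial (Fin (d+1)) ℝ) :
    polyC d (p * q) = polyC d p * polyC d q := by
  ext x; simp [polyC_apply, polyEval]

lemma mul_mem_polySpace {d M N : ℕ} {f g : C(Sph d, ℝ)} (hf : f ∈ polySpace d M)
    (hg : g ∈ polySpace d N) : f * g ∈ polySpace d (M + N) := by
  obtain ⟨p, hp, rfl⟩ := mem_polySpace.1 hf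
  obtain ⟨q, hq, rfl⟩ := mem_polySpace.1 hg
  exact mem_polySpace.2 ⟨p * q, (totalDegree_mul p q).trans (by omega), polyC_mul p q⟩

lemma totalDegree_aeval_le {σ τ : Type*} (f : σ → MvPolynomial τ ℝ)
    (hf : ∀ i, (f i).totalDegree ≤ 1) (q : MvPolynomial σ ℝ) :
    (aeval f q).totalDegree ≤ q.totalDegree := by
  rw [aeval_def, eval₂_eq]
  refine totalDegree_finsetSum_le fun s hs => ?_
  refine (totalDegree_mul _ _).trans ?_
  rw [algebraMap_eq, totalDegree_C, zero_add]
  refine (totalDegree_finsetProd _ _).trans ?_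
  refine le_trans ?_ (le_totalDegree hs)
  refine Finset.sum_le_sum fun i _ => (totalDegree_pow _ _).trans ?_
  simpa using Nat.mul_le_mul_left (s i) (hf i)

lemma continuous_sphereRot {d : ℕ}
    (T : EuclideanSpace ℝ (Fin (d+1)) ≃ₗᵢ[ℝ] EuclideanSpace ℝ (Fin (d+1))) :
    Continuous (sphereRot T) :=
  Continuous.subtype_mk (T.continuous.comp continuous_subtype_val) _

/-- `𝒫_M^d` is invariant under rotations. -/
lemma comp_rot_mem {d M : ℕ}
    (T : EuclideanSpace ℝ (Fin (d+1)) ≃ₗᵢ[ℝ] EuclideanSpace ℝ (Fin (d+1)))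
    {f : C(Sph d, ℝ)} (hf : f ∈ polySpace d M) :
    f.comp ⟨sphereRot T, continuous_sphereRot T⟩ ∈ polySpace d M := by
  obtain ⟨q, hq, rfl⟩ := mem_polySpace.1 hf
  let φ : Fin (d+1) → MvPolynomial (Fin (d+1)) ℝ := fun i =>
    ∑ j, C (T (EuclideanSpace.single j 1) i) * X j
  refine mem_polySpace.2 ⟨aeval φ q, (totalDegree_aeval_le φ (fun i => ?_) q).trans hq, ?_⟩
  · refine totalDegree_finsetSum_le fun j _ => (totalDegree_mul _ _).trans ?_
    simp
  · ext x
    have key : ∀ i, eval (fun i => (x : EuclideanSpace ℝ (Fin (d+1))) i) (φ i) =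
        T (x : EuclideanSpace ℝ (Fin (d+1))) i := by
      intro i
      have hx : (x : EuclideanSpace ℝ (Fin (d+1))) =
          ∑ j, (x : EuclideanSpace ℝ (Fin (d+1))) j • EuclideanSpace.single j (1 : ℝ) := by
        ext k
        simp [Finset.sum_apply, Pi.single_apply]
      conv_rhs => rw [hx]
      simp only [φ, map_sum, map_smul, map_mul, eval_C, eval_X]
      simp [mul_comm]
    simp only [polyC_apply, polyEval, ContinuousMap.comp_apply, ContinuousMap.coe_mk, sphereRot]
    rw [aeval_def, eval₂_eq, map_sum, eval_eq]
    refine Finset.sum_congr rfl fun s _ => ?_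
    simp [key]

/-- Reflections act transitively on the sphere. -/
lemma exists_rot {d : ℕ} (x y : Sph d) :
    ∃ T : EuclideanSpace ℝ (Fin (d+1)) ≃ₗᵢ[ℝ] EuclideanSpace ℝ (Fin (d+1)),
      sphereRot T x = y := by
  have hx : ‖(x : EuclideanSpace ℝ (Fin (d+1)))‖ = ‖(y : EuclideanSpace ℝ (Fin (d+1)))‖ := by
    rw [mem_sphere_zero_iff_norm.mp x.2, mem_sphere_zero_iff_norm.mp y.2]
  exact ⟨_, Subtype.ext (Submodule.reflection_sub hx)⟩

lemma IsUniform.isOpenPosMeasure {d : ℕ} {μ : Measure (Sph d)} (h : IsUniform μ) :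
    μ.IsOpenPosMeasure := by
  have := h.1
  refine ⟨fun U hU ⟨x₀, hx₀⟩ h0 => ?_⟩
  have : μ Set.univ = 0 := by
    refine measure_null_of_locally_null _ fun y _ => ?_
    obtain ⟨T, hT⟩ := exists_rot y x₀
    refine ⟨sphereRot T ⁻¹' U, ?_, ?_⟩
    · rw [nhdsWithin_univ]
      exact (hU.preimage (continuous_sphereRot T)).mem_nhds (by simpa [hT] using hx₀)
    · rw [← Measure.map_apply (continuous_sphereRot T).measurable hU.measurableSet, h.2 T, h0]
  simp at this

/-! ### Orthonormal bases and the reproducing kernel -/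

/-- A finite-dimensional space of continuous functions has an `L²(μ)`-orthonormal basis. -/
lemma exists_onb {d : ℕ} (μ : Measure (Sph d)) [IsProbabilityMeasure μ] [μ.IsOpenPosMeasure]
    (V : Submodule ℝ C(Sph d, ℝ)) [FiniteDimensional ℝ V] :
    ∃ e : Fin (Module.finrank ℝ V) → C(Sph d, ℝ), (∀ i, e i ∈ V) ∧
      (∀ i j, ∫ y, e i y * e j y ∂μ = if i = j then 1 else 0) ∧
      ∀ f ∈ V, f = ∑ i, (∫ y, f y * e i y ∂μ) • e i := by
  let Φ := (ContinuousMap.toLp (E := ℝ) 2 μ ℝ).toLinearMap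
  have hΦ : Function.Injective Φ := ContinuousMap.toLp_injective μ
  have hin : ∀ f g : C(Sph d, ℝ), inner ℝ (Φ f) (Φ g) = ∫ y, f y * g y ∂μ := by
    intro f g
    refine (ContinuousMap.inner_toLp μ f g).trans ?_
    simp [mul_comm]
  have hr : Module.finrank ℝ (V.map Φ) = Module.finrank ℝ V :=
    (Submodule.equivMapOfInjective Φ hΦ V).finrank_eq.symm
  let b := (stdOrthonormalBasis ℝ (V.map Φ)).reindex (finCongr hr)
  have hb : ∀ i, ∃ f ∈ V, Φ f = (b i : Lp ℝ 2 μ) := fun i => Submodule.mem_map.1 (b i).2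
  choose e heV he using hb
  refine ⟨e, heV, fun i j => ?_, fun f hf => hΦ ?_⟩
  · rw [← hin, he, he, ← Submodule.coe_inner]
    exact orthonormal_iff_ite.1 b.orthonormal i j
  · have := congrArg Subtype.val (b.sum_repr' ⟨Φ f, Submodule.mem_map_of_mem hf⟩)
    rw [map_sum]
    simp only [Submodule.coe_sum, Submodule.coe_smul, Submodule.coe_inner] at this
    rw [← this]
    refine Finset.sum_congr rfl fun i _ => ?_
    rw [map_smul, he, ← he, hin]
    congr 2
    ext y; ring

lemma integrable_continuousMap {d : ℕ} (μ : Measure (Sph d)) [IsProbabilityMeasure μ]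
    (f : C(Sph d, ℝ)) : Integrable f μ :=
  f.continuous.integrable_of_hasCompactSupport (HasCompactSupport.of_compactSpace _)

/-- Parseval's identity for a finite orthonormal system in `L²(μ)`. -/
lemma parseval {d D : ℕ} (μ : Measure (Sph d)) [IsProbabilityMeasure μ]
    (e : Fin D → C(Sph d, ℝ))
    (he : ∀ i j, ∫ y, e i y * e j y ∂μ = if i = j then 1 else 0) (a : Fin D → ℝ) :
    ∫ y, (∑ i, a i * e i y) ^ 2 ∂μ = ∑ i, a i ^ 2 := by
  have h1 : ∀ y, (∑ i, a i * e i y) ^ 2 = ∑ i, ∑ j, (a i * a j) * (e i * e j : C(Sph d, ℝ)) y := by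
    intro y
    rw [sq, Finset.sum_mul_sum]
    refine Finset.sum_congr rfl fun i _ => Finset.sum_congr rfl fun j _ => ?_
    simp only [ContinuousMap.mul_apply]; ring
  have hint : ∀ i j, Integrable (fun y => (a i * a j) * (e i * e j : C(Sph d, ℝ)) y) μ :=
    fun i j => (integrable_continuousMap μ _).const_mul _
  simp_rw [h1]
  rw [integral_finsetSum _ fun i _ => integrable_finsetSum _ fun j _ => hint i j]
  refine Finset.sum_congr rfl fun i _ => ?_
  rw [integral_finsetSum _ fun j _ => hint i j]
  simp_rw [integral_const_mul, ContinuousMap.mul_apply, he]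
  simp [sq]

/-- By rotation invariance the reproducing kernel `∑ eᵢ(x) eᵢ(y)` of `𝒫_M^d` equals
`dim 𝒫_M^d` on the diagonal, whence the sup-norm bound for elements of `𝒫_M^d`. -/
lemma exists_kernel {d : ℕ} {μ : Measure (Sph d)} (hμ : IsUniform μ) (M : ℕ)
    [FiniteDimensional ℝ (polySpace d M)] :
    ∃ e : Fin (Module.finrank ℝ (polySpace d M)) → C(Sph d, ℝ), (∀ i, e i ∈ polySpace d M) ∧
      (∀ i j, ∫ y, e i y * e j y ∂μ = if i = j then 1 else 0) ∧
      (∀ x, ∑ i, e i x ^ 2 = (Module.finrank ℝ (polySpace d M) : ℝ)) ∧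
      ∀ f ∈ polySpace d M, ∀ x,
        f x ^ 2 ≤ (Module.finrank ℝ (polySpace d M) : ℝ) * ∫ y, f y ^ 2 ∂μ := by
  have := hμ.1
  have := hμ.isOpenPosMeasure
  obtain ⟨e, heV, heo, hrep⟩ := exists_onb μ (polySpace d M)
  have hbound : ∀ f ∈ polySpace d M, ∀ x, f x ^ 2 ≤ (∑ i, e i x ^ 2) * ∫ y, f y ^ 2 ∂μ := by
    intro f hf x
    set c : Fin (Module.finrank ℝ (polySpace d M)) → ℝ := fun i => ∫ y, f y * e i y ∂μ with hc
    have hfy : ∀ y, f y = ∑ i, c i * e i y := by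
      intro y
      have := congrArg (fun F : C(Sph d, ℝ) => F y) (hrep f hf)
      simpa [ContinuousMap.sum_apply] using this
    have h2 : ∫ y, f y ^ 2 ∂μ = ∑ i, c i ^ 2 := by
      rw [← parseval μ e heo c]
      simp_rw [← hfy]
    rw [h2, hfy x, mul_comm]
    exact Finset.sum_mul_sq_le_sq_mul_sq _ _ _
  have hle : ∀ x y, ∑ i, e i y ^ 2 ≤ ∑ i, e i x ^ 2 := by
    intro x y
    obtain ⟨T, hT⟩ := exists_rot x y
    -- the extremal function for evaluation at `y`, transported to `x`
    set F : C(Sph d, ℝ) := ∑ i, e i y • e i with hF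
    have hFV : F ∈ polySpace d M :=
      Submodule.sum_mem _ fun i _ => Submodule.smul_mem _ _ (heV i)
    have hFz : ∀ z, F z = ∑ i, e i y * e i z := by
      intro z; simp [hF, ContinuousMap.sum_apply]
    have h1 := hbound _ (comp_rot_mem T hFV) x
    have h2 : ∫ z, (F.comp ⟨sphereRot T, continuous_sphereRot T⟩) z ^ 2 ∂μ
        = ∑ i, e i y ^ 2 := by
      rw [← parseval μ e heo (fun i => e i y)]
      simp_rw [← hFz]
      conv_rhs => rw [← hμ.2 T]
      rw [integral_map (continuous_sphereRot T).aemeasurable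
        (by fun_prop)]
      rfl
    have h3 : (F.comp ⟨sphereRot T, continuous_sphereRot T⟩) x = ∑ i, e i y ^ 2 := by
      simp only [ContinuousMap.comp_apply, ContinuousMap.coe_mk, hT, hFz]
      exact Finset.sum_congr rfl fun i _ => (sq _).symm
    rw [h2, h3] at h1
    have hx : 0 ≤ ∑ i, e i x ^ 2 := Finset.sum_nonneg fun i _ => sq_nonneg _
    have hy : 0 ≤ ∑ i, e i y ^ 2 := Finset.sum_nonneg fun i _ => sq_nonneg _
    rcases hy.eq_or_lt with h | h
    · rw [← h]; exact hx
    · exact le_of_mul_le_mul_right (by nlinarith) h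
  have hdiag : ∀ x, ∑ i, e i x ^ 2 = (Module.finrank ℝ (polySpace d M) : ℝ) := by
    intro x
    have h1 : ∫ y, ∑ i, e i y ^ 2 ∂μ = ∑ i, e i x ^ 2 := by
      have : ∀ y, ∑ i, e i y ^ 2 = ∑ i, e i x ^ 2 := fun y => le_antisymm (hle x y) (hle y x)
      simp_rw [this]; simp
    rw [← h1, integral_finsetSum _ fun i _ => by
      exact integrable_continuousMap μ (e i ^ 2)]
    simp_rw [sq, heo]
    simp
  exact ⟨e, heV, heo, hdiag, fun f hf x => hdiag x ▸ hbound f hf x⟩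

/-! ### Dimension of the polynomial spaces -/

lemma sum_sq_coord {d : ℕ} (x : Sph d) :
    ∑ i, (x : EuclideanSpace ℝ (Fin (d+1))) i ^ 2 = 1 := by
  have h := mem_sphere_zero_iff_norm.mp x.2
  have := EuclideanSpace.norm_sq_eq (x : EuclideanSpace ℝ (Fin (d+1)))
  rw [h] at this
  simpa using this.symm

/-- The relation `x₀² = 1 - ∑ xᵢ²` reduces the exponent of `x₀` to `0` or `1`. -/
lemma polySpace_le_span (d M : ℕ) : polySpace d M ≤ Submodule.span ℝ (Set.range
    fun p : Fin 2 × (Fin d → Fin (M+1)) =>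
      polyC d (X 0 ^ (p.1 : ℕ) * ∏ i, X i.succ ^ (p.2 i : ℕ))) := by
  set W := Submodule.span ℝ (Set.range
    fun p : Fin 2 × (Fin d → Fin (M+1)) =>
      polyC d (X 0 ^ (p.1 : ℕ) * ∏ i, X i.succ ^ (p.2 i : ℕ))) with hW
  have key : ∀ (a : ℕ) (b : Fin d → ℕ), a + ∑ i, b i ≤ M →
      polyC d (X 0 ^ a * ∏ i, X i.succ ^ b i) ∈ W := by
    intro a
    induction a using Nat.strong_induction_on with
    | _ a ih =>
      intro b hab
      rcases lt_or_ge a 2 with h | h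
      · refine Submodule.subset_span ⟨(⟨a, h⟩, fun i => ⟨b i, ?_⟩), rfl⟩
        have := Finset.single_le_sum (f := b) (fun i _ => Nat.zero_le _) (Finset.mem_univ i)
        omega
      · obtain ⟨a, rfl⟩ := Nat.exists_eq_add_of_le' h
        have hrel : polyC d (X 0 ^ (a + 2) * ∏ i, X i.succ ^ b i) =
            polyC d (X 0 ^ a * ∏ i, X i.succ ^ b i) -
            ∑ j : Fin d, polyC d (X 0 ^ a *
              ∏ i : Fin d, X i.succ ^ (b + Pi.single j 2 : Fin d → ℕ) i) := by
          ext x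
          have hx := sum_sq_coord x
          rw [Fin.sum_univ_succ] at hx
          simp only [polyC_apply, polyEval, ContinuousMap.sub_apply, ContinuousMap.sum_apply,
            map_mul, map_pow, map_prod, eval_X, Pi.add_apply, pow_add, Finset.prod_mul_distrib]
          have hs : ∀ j : Fin d, ∏ i : Fin d, (x : EuclideanSpace ℝ (Fin (d+1))) i.succ ^
              ((Pi.single j 2 : Fin d → ℕ) i) =
              (x : EuclideanSpace ℝ (Fin (d+1))) j.succ ^ 2 := by
            intro j
            rw [Finset.prod_eq_single j] <;> simp +contextual
          simp_rw [hs, ← Finset.mul_sum, eq_sub_iff_add_eq'.2 hx]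
          ring
        rw [hrel]
        refine Submodule.sub_mem _ (ih a (by omega) b (by omega))
          (Submodule.sum_mem _ fun j _ => ih a (by omega) _ ?_)
        simp only [Pi.add_apply, Finset.sum_add_distrib, Finset.sum_pi_single', Finset.mem_univ,
          if_true]
        omega
  intro f hf
  obtain ⟨q, hq, rfl⟩ := mem_polySpace.1 hf
  rw [q.as_sum, map_sum]
  refine Submodule.sum_mem _ fun s hs => ?_
  have hm : monomial s (coeff s q) =
      coeff s q • (X 0 ^ s 0 * ∏ i : Fin d, X i.succ ^ s i.succ) := by
    rw [monomial_eq, Finsupp.prod_fintype _ _ (by simp), Fin.prod_univ_succ, smul_eq_C_mul]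
  rw [hm, map_smul]
  refine Submodule.smul_mem _ _ (key _ _ ?_)
  have h1 := le_totalDegree hs
  rw [Finsupp.sum_fintype _ _ (by simp), Fin.sum_univ_succ] at h1
  exact h1.trans hq

instance finiteDimensional_polySpace (d M : ℕ) : FiniteDimensional ℝ (polySpace d M) :=
  have : FiniteDimensional ℝ (Submodule.span ℝ (Set.range
    fun p : Fin 2 × (Fin d → Fin (M+1)) =>
      polyC d (X 0 ^ (p.1 : ℕ) * ∏ i, X i.succ ^ (p.2 i : ℕ)))) :=
    FiniteDimensional.span_of_finite ℝ (Set.finite_range _)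
  Submodule.finiteDimensional_of_le (polySpace_le_span d M)

lemma finrank_polySpace_le (d M : ℕ) :
    Module.finrank ℝ (polySpace d M) ≤ 2 * (M + 1) ^ d := by
  have : FiniteDimensional ℝ (Submodule.span ℝ (Set.range
    fun p : Fin 2 × (Fin d → Fin (M+1)) =>
      polyC d (X 0 ^ (p.1 : ℕ) * ∏ i, X i.succ ^ (p.2 i : ℕ)))) :=
    FiniteDimensional.span_of_finite ℝ (Set.finite_range _)
  refine (Submodule.finrank_mono (polySpace_le_span d M)).trans ?_
  refine (finrank_range_le_card _).trans ?_
  simp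

/-- A polynomial in the last `d` coordinates vanishing on the sphere is zero: it vanishes on
the projection of the sphere, which contains the cube `[0, 1/d]^d`. -/
lemma polyC_rename_injective {d : ℕ} (hd : 1 ≤ d) :
    Function.Injective ((polyC d).comp
      (rename (R := ℝ) (Fin.succ : Fin d → Fin (d+1))).toLinearMap) := by
  rw [← LinearMap.ker_eq_bot, LinearMap.ker_eq_bot']
  intro p hp
  have hd' : (1 : ℝ) ≤ d := by exact_mod_cast hd
  refine funext_set (fun _ => Set.Icc (0 : ℝ) (1 / d))
    (fun _ => Set.Icc_infinite (by positivity)) fun u hu => ?_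
  have hu' : ∀ i, 0 ≤ u i ∧ u i ≤ 1 / d := fun i => hu i (Set.mem_univ i)
  have hs : ∑ i, u i ^ 2 ≤ 1 := by
    calc ∑ i, u i ^ 2 ≤ ∑ i : Fin d, (1 / d : ℝ) := by
          refine Finset.sum_le_sum fun i _ => ?_
          have h1 : (1 / d : ℝ) ≤ 1 := by rw [div_le_one (by positivity)]; exact hd'
          nlinarith [hu' i]
      _ = 1 := by
          simp; field_simp
  let x : Sph d := ⟨WithLp.toLp 2 (Fin.cons (Real.sqrt (1 - ∑ i, u i ^ 2)) u), by
    rw [mem_sphere_zero_iff_norm, EuclideanSpace.norm_eq, Fin.sum_univ_succ]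
    simp only [Fin.cons_zero, Fin.cons_succ, Real.norm_eq_abs, sq_abs]
    rw [Real.sq_sqrt (by linarith)]
    simp⟩
  have := congrArg (fun F : C(Sph d, ℝ) => F x) hp
  simp only [LinearMap.comp_apply, AlgHom.toLinearMap_apply, polyC_apply, polyEval,
    eval_rename, ContinuousMap.zero_apply] at this
  rw [map_zero, ← this]
  congr 1

lemma le_finrank_polySpace {d : ℕ} (hd : 1 ≤ d) (M k : ℕ) (hk : d * k ≤ M) :
    (k + 1) ^ d ≤ Module.finrank ℝ (polySpace d M) := by
  let v : (Fin d → Fin (k+1)) → MvPolynomial (Fin d) ℝ := fun a =>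
    basisMonomials (Fin d) ℝ (Finsupp.equivFunOnFinite.symm fun i => (a i : ℕ))
  have hv : LinearIndependent ℝ v := by
    refine (basisMonomials (Fin d) ℝ).linearIndependent.comp _ ?_
    intro a b hab
    ext i
    exact congrFun (Finsupp.equivFunOnFinite.symm.injective hab) i
  have hv2 := hv.map' _ (LinearMap.ker_eq_bot.2 (polyC_rename_injective hd))
  have hmem : ∀ a, polyC d (rename Fin.succ (v a)) ∈ polySpace d M := by
    intro a
    refine mem_polySpace.2 ⟨_, ?_, rfl⟩
    refine (totalDegree_rename_le _ _).trans ?_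
    simp only [v, coe_basisMonomials]
    refine (totalDegree_monomial_le _ _).trans ?_
    rw [Finsupp.sum_fintype _ _ (by simp)]
    refine le_trans ?_ hk
    calc _ ≤ ∑ i : Fin d, k := Finset.sum_le_sum fun i _ => Nat.lt_succ_iff.1 (a i).2
      _ = d * k := by simp
  have hv3 : LinearIndependent ℝ
      (fun a => (⟨polyC d (rename Fin.succ (v a)), hmem a⟩ : polySpace d M)) :=
    LinearIndependent.of_comp (polySpace d M).subtype hv2
  simpa using hv3.fintype_card_le_finrank

/-! ### The design inequality -/

/-- Comparison of the design with the uniform measure, with the explicit constant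
`dim 𝒫_{L+L₀} / dim 𝒫_{L₀}`. -/
lemma design_sum_le {d : ℕ} {μ : Measure (Sph d)} (hμ : IsUniform μ) {L₀ n t L : ℕ}
    (hn : 0 < n) (x : Fin n → Sph d) (ht : 2 * L₀ ≤ t) (hX : IsDesign μ x t)
    (hD : 0 < Module.finrank ℝ (polySpace d L₀))
    (f : C(Sph d, ℝ)) (hf : f ∈ polySpace d L) :
    (∑ i, f (x i) ^ 2) / n ≤ (Module.finrank ℝ (polySpace d (L + L₀)) : ℝ) /
      (Module.finrank ℝ (polySpace d L₀) : ℝ) * ∫ y, f y ^ 2 ∂μ := by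
  have := hμ.1
  obtain ⟨e, heV, heo, hdiag, -⟩ := exists_kernel hμ L₀
  obtain ⟨-, -, -, -, hsup⟩ := exists_kernel hμ (L + L₀)
  set D₀ : ℝ := (Module.finrank ℝ (polySpace d L₀) : ℝ)
  set D₁ : ℝ := (Module.finrank ℝ (polySpace d (L + L₀)) : ℝ)
  have hD₀ : 0 < D₀ := Nat.cast_pos.2 hD
  have hn' : (0 : ℝ) < n := Nat.cast_pos.2 hn
  let K : Sph d → C(Sph d, ℝ) := fun z => ∑ j, e j z • e j
  have hK : ∀ z y, K z y = ∑ j, e j z * e j y := fun z y => by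
    simp [K, ContinuousMap.sum_apply]
  have hKV : ∀ z, K z ∈ polySpace d L₀ := fun z =>
    Submodule.sum_mem _ fun j _ => Submodule.smul_mem _ _ (heV j)
  have hsymm : ∀ z y, K z y = K y z := fun z y => by simp_rw [hK, mul_comm]
  have hKd : ∀ z, K z z = D₀ := fun z => by rw [hK, ← hdiag z]; simp_rw [sq]
  have hKint : ∀ z, ∫ y, K z y ^ 2 ∂μ = D₀ := fun z => by
    simp_rw [hK]; rw [parseval μ e heo fun j => e j z, hdiag]
  have hdes : ∀ y, ∑ i, K (x i) y ^ 2 = n * D₀ := by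
    intro y
    obtain ⟨q, hq, hqK⟩ := mem_polySpace.1 (mul_mem_polySpace (hKV y) (hKV y))
    have h1 := hX q (by omega)
    have h2 : ∀ z, polyEval q z = K y z ^ 2 := fun z => by
      rw [← polyC_apply, hqK, ContinuousMap.mul_apply, sq]
    simp_rw [h2] at h1
    rw [hKint, div_eq_iff hn'.ne'] at h1
    simp_rw [hsymm _ y]
    linarith
  -- the sup-norm bound in degree `L + L₀`, applied to `f * K z` at the point `z`
  have hpt : ∀ z, f z ^ 2 * D₀ ^ 2 ≤ D₁ * ∫ y, f y ^ 2 * K z y ^ 2 ∂μ := by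
    intro z
    have := hsup _ (mul_mem_polySpace hf (hKV z)) z
    simpa only [ContinuousMap.mul_apply, mul_pow, hKd] using this
  have hsum : (∑ i, f (x i) ^ 2) * D₀ ^ 2 ≤ D₁ * ((n * D₀) * ∫ y, f y ^ 2 ∂μ) := by
    rw [Finset.sum_mul]
    refine (Finset.sum_le_sum fun i _ => hpt (x i)).trans_eq ?_
    rw [← Finset.mul_sum, ← integral_finsetSum _ fun i _ => by
      exact integrable_continuousMap μ (f ^ 2 * K (x i) ^ 2)]
    simp_rw [← Finset.mul_sum, hdes]
    rw [integral_mul_const, mul_comm (∫ y, f y ^ 2 ∂μ)]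
  rw [div_le_iff₀ hn', div_mul_eq_mul_div, div_mul_eq_mul_div, le_div_iff₀ hD₀]
  refine le_of_mul_le_mul_right ?_ hD₀
  linarith

/-- The bounds `(M / d)^d ≤ dim 𝒫_M^d ≤ 2 (M + 1)^d` give the growth of the ratio, using
`L + L₀ + 1 ≤ 3 L`. -/
lemma finrank_ratio_le {d L L₀ : ℕ} (hd : 1 ≤ d) (hL₀ : 1 ≤ L₀) (hL : L₀ ≤ L) :
    (Module.finrank ℝ (polySpace d (L + L₀)) : ℝ) / (Module.finrank ℝ (polySpace d L₀) : ℝ)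
      ≤ 2 * (3 * d) ^ d * ((L : ℝ) / (L₀ : ℝ)) ^ d := by
  have h1 : (Module.finrank ℝ (polySpace d (L + L₀)) : ℝ) ≤ 2 * (3 * L) ^ d := by
    have h : Module.finrank ℝ (polySpace d (L + L₀)) ≤ 2 * (3 * L) ^ d :=
      (finrank_polySpace_le d (L + L₀)).trans
        (Nat.mul_le_mul_left 2 (Nat.pow_le_pow_left (by omega) d))
    exact_mod_cast h
  have h2 : ((L₀ : ℝ) / d) ^ d ≤ (Module.finrank ℝ (polySpace d L₀) : ℝ) := by
    have h := le_finrank_polySpace hd L₀ (L₀ / d) (Nat.mul_div_le L₀ d)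
    have h' : (L₀ : ℝ) / d ≤ ((L₀ / d + 1 : ℕ) : ℝ) := by
      rw [div_le_iff₀ (by positivity)]
      have := Nat.lt_div_mul_add (a := L₀) (b := d) hd
      have h3 : L₀ ≤ (L₀ / d + 1) * d := by rw [add_mul]; omega
      exact_mod_cast h3
    calc ((L₀ : ℝ) / d) ^ d ≤ ((L₀ / d + 1 : ℕ) : ℝ) ^ d :=
          pow_le_pow_left₀ (by positivity) h' d
      _ ≤ _ := by exact_mod_cast h
  have h0 : (0 : ℝ) < L₀ := by exact_mod_cast hL₀
  have hd0 : (0 : ℝ) < d := by exact_mod_cast hd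
  calc _ ≤ (2 * (3 * L) ^ d : ℝ) / ((L₀ : ℝ) / d) ^ d := by gcongr
    _ = _ := by
      rw [div_eq_iff (by positivity), mul_assoc, mul_assoc, ← mul_pow, ← mul_pow]
      congr 2
      field_simp

end DesignBound

theorem stmt_1 (d : ℕ) (hd : 1 ≤ d) :
    ∃ C : ℝ, 0 < C ∧
      ∀ (μ : MeasureTheory.Measure (Sph d)), IsUniform μ →
      ∀ (L₀ : ℕ), 1 ≤ L₀ →
      ∀ (n : ℕ), 0 < n → ∀ (x : Fin n → Sph d) (t : ℕ), 2 * L₀ ≤ t →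
      IsDesign μ x t →
      ∀ L : ℕ, L₀ ≤ L → ∀ g : Sph d → ℝ, InPoly d L g →
        (∑ i, g (x i) ^ 2) / n
          ≤ C * ((L : ℝ) / (L₀ : ℝ)) ^ d * ∫ y, g y ^ 2 ∂μ := by
  refine ⟨2 * (3 * d) ^ d, by positivity, ?_⟩
  intro μ hμ L₀ hL₀ n hn x t ht hX L hL g ⟨q, hq, hg⟩
  obtain rfl : g = polyC d q := funext hg
  have hD : 0 < Module.finrank ℝ (polySpace d L₀) :=
    lt_of_lt_of_le (by positivity) (le_finrank_polySpace hd L₀ 0 (by simp))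
  refine (design_sum_le hμ hn x ht hX hD (polyC d q) (mem_polySpace.2 ⟨q, hq, rfl⟩)).trans ?_
  exact mul_le_mul_of_nonneg_right (finrank_ratio_le hd hL₀ hL)
    (integral_nonneg fun y => sq_nonneg _)
end

section
/- Let n ≥ 1, let a, b ∈ ℝⁿ, and let σ > 0. Let P be the n-fold product measure on ℝⁿ whose i-th factor is the Gaussian distribution N(aᵢ, σ²), and let Q be the corresponding product measure with means bᵢ (i.e. P and Q are the multivariate Gaussian distributions with means a, b and common covariance matrix σ² Iₙ). Then the total variation distance between P and Q equals V(P,Q) = 1 − 2Φ(−‖a−b‖₂/(2σ)), where ‖a−b‖₂ is the Euclidean norm of a−b. -/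
/-!
The likelihood ratio of `P` against `Q` depends on `x` only through a linear statistic. Writing
`a - b = D u` with `D = ‖a - b‖₂` and `u` a unit vector, and
`T x = ∑ i, u i / σ * (x i - b i)`, one has `dP/dQ = exp (δ (T - δ / 2))` with `δ = D / σ`.
Hence `dP/dQ ≥ 1` on the half-space `H = {T ≥ δ / 2}` and `dP/dQ ≤ 1` off it, so the supremum
defining the total variation distance is attained at `H` (`tvDist_eq_of_split`).

The statistic `T` is `N(0, 1)` under `Q` and `N(δ, 1)` under `P` (`pi_gaussianReal_map_sum`), so
`Q(H) = Φ(-δ / 2)` and `P(H) = 1 - Φ(-δ / 2)`, and the difference is the claimed value.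
-/

open MeasureTheory

noncomputable section

/-- The standard Gaussian cumulative distribution function Φ. -/
def Phi (u : ℝ) : ℝ := ((ProbabilityTheory.gaussianReal 0 1) (Set.Iic u)).toReal

/-- The total variation distance `V(P,Q) = sup_A |P(A) − Q(A)|`. -/
def tvDist {α : Type*} [MeasurableSpace α] (P Q : MeasureTheory.Measure α) : ℝ :=
  ⨆ A : {A : Set α // MeasurableSet A}, |(P A.1).toReal - (Q A.1).toReal|

end

/-- A set `H` with `P ≥ Q` on its subsets and `P ≤ Q` on the subsets of its complement (a Hahn
decomposition of `P - Q`) attains the total variation distance. -/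
lemma tvDist_eq_of_split {α : Type*} [MeasurableSpace α] (P Q : Measure α)
    [IsProbabilityMeasure P] [IsProbabilityMeasure Q] {H : Set α} (hH : MeasurableSet H)
    (h1 : ∀ B, MeasurableSet B → B ⊆ H → Q B ≤ P B)
    (h2 : ∀ B, MeasurableSet B → B ⊆ Hᶜ → P B ≤ Q B) :
    tvDist P Q = P.real H - Q.real H := by
  -- Discarding `A \ H` and adjoining `H \ A` can only increase `P - Q`.
  have one_sided : ∀ A, MeasurableSet A → P.real A - Q.real A ≤ P.real H - Q.real H := by
    intro A hA
    have e1 := measureReal_inter_add_sdiff (μ := P) (s := A) hH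
    have e2 := measureReal_inter_add_sdiff (μ := Q) (s := A) hH
    have e3 := measureReal_inter_add_sdiff (μ := P) (s := H) hA
    have e4 := measureReal_inter_add_sdiff (μ := Q) (s := H) hA
    rw [Set.inter_comm] at e3 e4
    have i1 : Q.real (H \ A) ≤ P.real (H \ A) :=
      ENNReal.toReal_mono (by finiteness) (h1 _ (hH.diff hA) Set.sdiff_subset)
    have i2 : P.real (A \ H) ≤ Q.real (A \ H) :=
      ENNReal.toReal_mono (by finiteness) (h2 _ (hA.diff hH) fun x hx => hx.2)
    linarith
  have bound : ∀ A, MeasurableSet A → |P.real A - Q.real A| ≤ P.real H - Q.real H := by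
    intro A hA
    refine abs_le'.2 ⟨one_sided A hA, ?_⟩
    -- The reverse difference at `A` is the difference at the complement of `A`.
    have := one_sided Aᶜ hA.compl
    rw [probReal_compl_eq_one_sub hA, probReal_compl_eq_one_sub hA] at this
    linarith
  refine le_antisymm (ciSup_le fun A => bound A.1 A.2) ?_
  refine (le_abs_self _).trans (le_ciSup (f := fun A : {A : Set α // MeasurableSet A} =>
    |P.real A.1 - Q.real A.1|) ⟨P.real H - Q.real H, ?_⟩ ⟨H, hH⟩)
  rintro _ ⟨A, rfl⟩
  exact bound A.1 A.2

/-- Likelihood ratio of two Gaussians on the line with the same nonzero variance. -/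
lemma gaussianReal_eq_withDensity (a b : ℝ) {v : NNReal} (hv : v ≠ 0) :
    ProbabilityTheory.gaussianReal a v = (ProbabilityTheory.gaussianReal b v).withDensity
      (fun x => ENNReal.ofReal (Real.exp (((x - b) ^ 2 - (x - a) ^ 2) / (2 * v)))) := by
  rw [ProbabilityTheory.gaussianReal_of_var_ne_zero _ hv,
    ProbabilityTheory.gaussianReal_of_var_ne_zero _ hv,
    ← withDensity_mul _ (by fun_prop) (by fun_prop)]
  congr 1
  ext x
  simp only [ProbabilityTheory.gaussianPDF, ProbabilityTheory.gaussianPDFReal, Pi.mul_apply]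
  rw [← ENNReal.ofReal_mul (by positivity), mul_assoc _ (Real.exp _), ← Real.exp_add]
  congr 3
  ring

/-- A finite product of measures with densities has the product of the densities as its density.
On a box, the integral of the product splits because the coordinates are independent under
`Measure.pi μ`. -/
lemma pi_withDensity {ι : Type*} [Fintype ι] {X : ι → Type*} [∀ i, MeasurableSpace (X i)]
    (μ ν : ∀ i, Measure (X i)) [∀ i, IsProbabilityMeasure (μ i)]
    [∀ i, IsProbabilityMeasure (ν i)] (f : ∀ i, X i → ENNReal) (hf : ∀ i, Measurable (f i))
    (h : ∀ i, ν i = (μ i).withDensity (f i)) :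
    Measure.pi ν = (Measure.pi μ).withDensity (fun x => ∏ i, f i (x i)) := by
  classical
  refine Measure.pi_eq fun s hs => ?_
  have key : ∀ x : ∀ i, X i, (Set.univ.pi s).indicator (fun x => ∏ i, f i (x i)) x
      = ∏ i, (s i).indicator (f i) (x i) := by
    intro x
    by_cases hx : x ∈ Set.univ.pi s
    · rw [Set.indicator_of_mem hx]
      exact Finset.prod_congr rfl fun i _ => (Set.indicator_of_mem (hx i trivial) _).symm
    · rw [Set.indicator_of_notMem hx]
      simp only [Set.mem_pi, Set.mem_univ, true_imp_iff, not_forall] at hx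
      obtain ⟨i, hi⟩ := hx
      exact (Finset.prod_eq_zero (Finset.mem_univ i) (Set.indicator_of_notMem hi _)).symm
  rw [withDensity_apply _ (MeasurableSet.univ_pi hs),
    ← lintegral_indicator (MeasurableSet.univ_pi hs)]
  simp_rw [key]
  have hm : ∀ i, Measurable ((s i).indicator (f i)) := fun i => (hf i).indicator (hs i)
  rw [ProbabilityTheory.lintegral_prod_eq_prod_lintegral_of_indepFun (Finset.univ)
    (fun i (x : ∀ i, X i) => (s i).indicator (f i) (x i))
    (ProbabilityTheory.iIndepFun_pi fun i => (hm i).aemeasurable)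
    (fun i => (hm i).comp (measurable_pi_apply i))]
  refine Finset.prod_congr rfl fun i _ => ?_
  rw [h i, withDensity_apply _ (hs i), ← lintegral_indicator (hs i)]
  exact (measurePreserving_eval μ i).lintegral_comp (hm i)

/-- The projection of an isotropic Gaussian vector onto a unit direction, recentred at `b` and
rescaled by `σ`, is Gaussian with unit variance. -/
lemma pi_gaussianReal_map_sum {n : ℕ} (m b u : Fin n → ℝ) {σ : ℝ} (hσ : 0 < σ)
    {v : NNReal} (hv : (v : ℝ) = σ ^ 2)
    (hu : ∑ i, u i ^ 2 = 1) :
    (Measure.pi fun i => ProbabilityTheory.gaussianReal (m i) v).map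
      (fun x => ∑ i, u i / σ * (x i - b i))
      = ProbabilityTheory.gaussianReal (∑ i, u i / σ * (m i - b i)) 1 := by
  -- The summands are independent Gaussians of variance `u i ^ 2`; compare characteristic functions.
  have hm : ∀ i, Measurable fun y : ℝ => u i / σ * (y - b i) := fun i => by fun_prop
  refine Measure.ext_of_charFun ?_
  have hind := ProbabilityTheory.iIndepFun_pi
    (μ := fun i => ProbabilityTheory.gaussianReal (m i) v)
    fun i => (hm i).aemeasurable
  have hsm : ∀ i, AEMeasurable (fun x : Fin n → ℝ => u i / σ * (x i - b i))
      (Measure.pi fun i => ProbabilityTheory.gaussianReal (m i) v) := fun i =>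
    ((hm i).comp (measurable_pi_apply i)).aemeasurable
  rw [hind.charFun_map_fun_sum_eq_prod hsm]
  have h1 : ∀ i, (Measure.pi fun i =>
      ProbabilityTheory.gaussianReal (m i) v).map
      (fun x => u i / σ * (x i - b i))
      = ProbabilityTheory.gaussianReal (u i / σ * (m i - b i)) (u i ^ 2).toNNReal := by
    intro i
    rw [show (fun x : Fin n → ℝ => u i / σ * (x i - b i))
        = (fun y => u i / σ * y) ∘ (fun y => y - b i) ∘ Function.eval i from rfl,
      ← Measure.map_map (by fun_prop) (by fun_prop), ← Measure.map_map (by fun_prop) (by fun_prop),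
      (measurePreserving_eval _ i).map_eq, ProbabilityTheory.gaussianReal_map_sub_const,
      ProbabilityTheory.gaussianReal_map_const_mul]
    congr 1
    ext
    rw [Real.coe_toNNReal _ (sq_nonneg _), NNReal.coe_mul, hv]
    simp only [NNReal.coe_mk]
    field_simp
  ext t
  simp_rw [Finset.prod_apply, h1, ProbabilityTheory.charFun_gaussianReal]
  rw [← Complex.exp_sum, Finset.sum_sub_distrib, ← Finset.sum_div, ← Finset.sum_mul,
    ← Finset.sum_mul, ← Finset.mul_sum]
  congr 2
  · push_cast; ring
  · have : ∑ i, (u i : ℂ) ^ 2 = 1 := by exact_mod_cast hu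
    simp [this, Real.coe_toNNReal _ (sq_nonneg _)]

/-- Upper tails of the standard Gaussian, by symmetry under negation. -/
lemma gaussianReal_one_Ici (c : ℝ) :
    (ProbabilityTheory.gaussianReal 0 1).real (Set.Ici c) = Phi (-c) := by
  have h := ProbabilityTheory.gaussianReal_map_neg (μ := 0) (v := 1)
  rw [neg_zero] at h
  unfold Phi Measure.real
  conv_rhs => rw [← h]
  rw [Measure.map_apply measurable_neg measurableSet_Iic]
  simp [Set.preimage, Set.Ici]

/-- The mass that `N(δ, 1)` puts above the midpoint `δ / 2` between its mean and `0`; the boundary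
point is negligible. -/
lemma gaussianReal_Ici (δ : ℝ) :
    (ProbabilityTheory.gaussianReal δ 1).real (Set.Ici (δ / 2)) = 1 - Phi (-(δ / 2)) := by
  have hn := ProbabilityTheory.nullSingletonClass_gaussianReal (μ := 0) (v := 1) one_ne_zero
  have h := ProbabilityTheory.gaussianReal_map_add_const (μ := 0) (v := 1) δ
  rw [zero_add] at h
  have h2 : (ProbabilityTheory.gaussianReal δ 1).real (Set.Ici (δ / 2))
      = (ProbabilityTheory.gaussianReal 0 1).real (Set.Iio (-(δ / 2)))ᶜ := by
    rw [← h, map_measureReal_apply (by fun_prop) measurableSet_Ici]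
    congr 1
    ext x
    simp only [Set.mem_preimage, Set.mem_Ici, Set.mem_compl_iff, Set.mem_Iio, not_lt]
    constructor <;> intro <;> linarith
  rw [h2, probReal_compl_eq_one_sub measurableSet_Iio]
  congr 1
  exact congrArg ENNReal.toReal (measure_congr Iio_ae_eq_Iic)

/-- Polar decomposition of `d`. When `d = 0` any unit vector serves as the direction; its existence
is where `1 ≤ n` enters. -/
lemma exists_unit_direction {n : ℕ} (hn : 1 ≤ n) (d : Fin n → ℝ) :
    ∃ u : Fin n → ℝ, ∑ i, u i ^ 2 = 1 ∧ ∀ i, d i = Real.sqrt (∑ i, d i ^ 2) * u i := by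
  have hs : 0 ≤ ∑ i, d i ^ 2 := Finset.sum_nonneg fun i _ => sq_nonneg _
  rcases hs.eq_or_lt with h | h
  · refine ⟨Pi.single ⟨0, hn⟩ 1, ?_, fun i => ?_⟩
    · simp [Pi.single_apply, ite_pow]
    · rw [← h]
      have := (Finset.sum_eq_zero_iff_of_nonneg fun i _ => sq_nonneg (d i)).1 h.symm i
        (Finset.mem_univ i)
      simpa using this
  · have hp := Real.sqrt_pos.2 h
    refine ⟨fun i => d i / Real.sqrt (∑ i, d i ^ 2), ?_, fun i => by field_simp⟩
    simp_rw [div_pow, ← Finset.sum_div, Real.sq_sqrt hs]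
    exact div_self h.ne'

/-- The formula with the common variance `v = σ ^ 2` as a free nonnegative real. -/
lemma tvDist_pi_gaussianReal (n : ℕ) (hn : 1 ≤ n) (a b : Fin n → ℝ) (σ : ℝ) (hσ : 0 < σ)
    (v : NNReal) (hv : (v : ℝ) = σ ^ 2) :
    tvDist
      (Measure.pi fun i =>
        ProbabilityTheory.gaussianReal (a i) v)
      (Measure.pi fun i =>
        ProbabilityTheory.gaussianReal (b i) v)
      = 1 - 2 * Phi (-(Real.sqrt (∑ i, (a i - b i) ^ 2)) / (2 * σ)) := by
  obtain ⟨u, hu, hd⟩ := exists_unit_direction hn (fun i => a i - b i)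
  set D := Real.sqrt (∑ i, (a i - b i) ^ 2) with hD
  have hD0 : 0 ≤ D := Real.sqrt_nonneg _
  set P := Measure.pi fun i => ProbabilityTheory.gaussianReal (a i) v with hP
  set Q := Measure.pi fun i => ProbabilityTheory.gaussianReal (b i) v with hQ
  have hv0 : v ≠ 0 := by
    rintro rfl
    exact (pow_pos hσ 2).ne hv
  set T : (Fin n → ℝ) → ℝ := fun x => ∑ i, u i / σ * (x i - b i) with hT
  have hTm : Measurable T := by fun_prop
  have hPT : P.map T = ProbabilityTheory.gaussianReal (D / σ) 1 := by
    rw [hP, pi_gaussianReal_map_sum a b u hσ hv hu]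
    congr 1
    calc ∑ i, u i / σ * (a i - b i) = ∑ i, D / σ * u i ^ 2 :=
          Finset.sum_congr rfl fun i _ => by rw [hd i]; ring
      _ = D / σ := by rw [← Finset.mul_sum, hu, mul_one]
  have hQT : Q.map T = ProbabilityTheory.gaussianReal 0 1 := by
    rw [hQ, pi_gaussianReal_map_sum b b u hσ hv hu]
    simp
  have hdens : P = Q.withDensity
      (fun x => ENNReal.ofReal (Real.exp (D / σ * (T x - D / σ / 2)))) := by
    rw [hP, pi_withDensity _ _ _ (fun i => by fun_prop)
      fun i => gaussianReal_eq_withDensity (a i) (b i) hv0]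
    congr 1
    ext x
    rw [← ENNReal.ofReal_prod_of_nonneg fun i _ => (Real.exp_pos _).le, ← Real.exp_sum]
    congr 2
    rw [hv]
    -- Complete the square coordinatewise; the constant terms add up since `u` is a unit vector.
    have e : ∀ i, ((x i - b i) ^ 2 - (x i - a i) ^ 2) / (2 * σ ^ 2)
        = D / σ * (u i / σ * (x i - b i)) - D ^ 2 / (2 * σ ^ 2) * u i ^ 2 := by
      intro i
      rw [show a i = b i + D * u i by linarith [hd i]]
      field_simp
      ring
    calc ∑ i, ((x i - b i) ^ 2 - (x i - a i) ^ 2) / (2 * σ ^ 2)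
        = D / σ * T x - D ^ 2 / (2 * σ ^ 2) := by
          simp_rw [e, Finset.sum_sub_distrib, ← Finset.mul_sum, hu, mul_one, hT]
      _ = _ := by field_simp
  have hδ : 0 ≤ D / σ := by positivity
  have hH : MeasurableSet (T ⁻¹' Set.Ici (D / σ / 2)) := hTm measurableSet_Ici
  rw [tvDist_eq_of_split P Q hH]
  · rw [← map_measureReal_apply hTm measurableSet_Ici, ← map_measureReal_apply hTm measurableSet_Ici,
      hPT, hQT, gaussianReal_Ici, gaussianReal_one_Ici,
      show -D / (2 * σ) = -(D / σ / 2) by field_simp]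
    ring
  · intro B hB hBH
    rw [hdens, withDensity_apply _ hB, ← setLIntegral_one]
    refine setLIntegral_mono' hB fun x hx => ?_
    rw [← ENNReal.ofReal_one]
    refine ENNReal.ofReal_le_ofReal (Real.one_le_exp (mul_nonneg hδ ?_))
    exact sub_nonneg.2 (hBH hx)
  · intro B hB hBH
    rw [hdens, withDensity_apply _ hB, ← setLIntegral_one]
    refine setLIntegral_mono' hB fun x hx => ?_
    rw [← ENNReal.ofReal_one]
    refine ENNReal.ofReal_le_ofReal (Real.exp_le_one_iff.2 (mul_nonpos_of_nonneg_of_nonpos hδ ?_))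
    have hx' : ¬ D / σ / 2 ≤ T x := hBH hx
    exact sub_nonpos.2 (not_le.1 hx').le

theorem stmt_5 (n : ℕ) (hn : 1 ≤ n) (a b : Fin n → ℝ) (σ : ℝ) (hσ : 0 < σ) :
    tvDist
      (MeasureTheory.Measure.pi fun i =>
        ProbabilityTheory.gaussianReal (a i) ⟨σ ^ 2, sq_nonneg σ⟩)
      (MeasureTheory.Measure.pi fun i =>
        ProbabilityTheory.gaussianReal (b i) ⟨σ ^ 2, sq_nonneg σ⟩)
      = 1 - 2 * Phi (-(Real.sqrt (∑ i, (a i - b i) ^ 2)) / (2 * σ)) := by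
  exact tvDist_pi_gaussianReal n hn a b σ hσ _ rfl
end
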